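/- arXiv:2506.15356 — 2 statements merged into one kernel-verified Lean document; each statement's English description precedes it below -/
import Mathlib

section
/- Integral identity for the iterated convolution S⁰_m: Let t > 0, δ ∈ (0,t), and let ℓ₁,…,ℓ_m > 0. Then ∫_{t−δ}^{t} S⁰_m(t−τ;−ℓ₁,…,−ℓ_m;−α₁,…,−α_m) dτ = ∫_D ∏_{i=1}^{m} W(−ζ_i;−α_i,1−α_i) dζ₁ ⋯ dζ_m, where D = {(ζ₁,…,ζ_m) ∈ (0,∞)^m : ∑_{k=1}^{m} (ℓ_k/ζ_k)^{1/α_k} < δ}. Equivalently, the right-hand side is the iterated integral ∫_{δ_m^m}^∞ W(−ζ_m;−α_m,1−α_m) ⋯ ∫_{δ_1^m}^∞ W(−ζ₁;−α₁,1−α₁) dζ₁ ⋯ dζ_m with lower limits δ_i^m = ℓ_i / (δ − ∑_{k=i+1}^{m} (ℓ_k/ζ_k)^{1/α_k})^{α_i}. -/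
open MeasureTheory Real Filter Set Topology intervalIntegral

/-- The Wright function `W(z; -β, δ) = ∑ z^k/(k! Γ(δ - βk))`, with `1/Γ` the
entire reciprocal Gamma function (here `Real.Gamma` vanishes at nonpositive
integers, so division gives the correct value `0`). -/
noncomputable def wrightW (β δ z : ℝ) : ℝ :=
  ∑' k : ℕ, z ^ k / (k.factorial * Real.Gamma (δ - β * k))

/-- Laplace convolution on `(0, ∞)`. -/
noncomputable def laplaceConv (f g : ℝ → ℝ) : ℝ → ℝ :=
  fun t => ∫ τ in (0:ℝ)..t, f τ * g (t - τ)

/-- Iterated Laplace convolution `h₀ ∗ h₁ ∗ ⋯ ∗ hₙ`. -/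
noncomputable def iterConv : (n : ℕ) → (Fin (n + 1) → ℝ → ℝ) → ℝ → ℝ
  | 0, h => h 0
  | n + 1, h => laplaceConv (iterConv n (fun i => h i.castSucc)) (h (Fin.last (n + 1)))

/-- `S^μ_m(t; -ℓ₁, …, -ℓ_m; -α₁, …, -α_m)` with the decomposition `μ₁ = μ`,
`μ_j = 0` for `j ≥ 2`: the Laplace convolution of
`h_j(t) = t^{μ_j - 1} W(-ℓ_j t^{-α_j}; -α_j, μ_j)`.  Indices run over
`Fin (n+1)`, i.e. the number of terms is `m = n + 1 ≥ 1`. -/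
noncomputable def Sconv (n : ℕ) (μ : ℝ) (α ℓ : Fin (n + 1) → ℝ) : ℝ → ℝ :=
  iterConv n (fun j t =>
    t ^ ((if j = 0 then μ else 0) - 1) *
      wrightW (α j) (if j = 0 then μ else 0) (-(ℓ j) * t ^ (-(α j))))

/-- `Γ^μ₁(x,t)`. -/
noncomputable def Gam1 (n : ℕ) (α lam : Fin (n + 1) → ℝ) (μ x t : ℝ) : ℝ :=
  (4 * Real.pi) ^ (-(1/2 : ℝ)) *
    ∫ p in Set.Ioi (0:ℝ),
      p ^ (-(1/2 : ℝ)) * Real.exp (-(|x| ^ 2) / (4 * p)) *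
        Sconv n μ α (fun j => lam j * p) t

/-- The kernel `E(x,t) = Γ⁰₁(x,t)`. -/
noncomputable def kerE (n : ℕ) (α lam : Fin (n + 1) → ℝ) (x t : ℝ) : ℝ :=
  Gam1 n α lam 0 x t

/-- `E_x`, the spatial derivative of `E`. -/
noncomputable def kerEx (n : ℕ) (α lam : Fin (n + 1) → ℝ) (x t : ℝ) : ℝ :=
  deriv (fun y => kerE n α lam y t) x

/-- `E_xx`, the second spatial derivative of `E`. -/
noncomputable def kerExx (n : ℕ) (α lam : Fin (n + 1) → ℝ) (x t : ℝ) : ℝ :=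
  deriv (fun y => kerEx n α lam y t) x

/-- The kernel `Z(x,t) = ∑ₖ λₖ Γ^{1-αₖ}₁(x,t)`. -/
noncomputable def kerZ (n : ℕ) (α lam : Fin (n + 1) → ℝ) (x t : ℝ) : ℝ :=
  ∑ k : Fin (n + 1), lam k * Gam1 n α lam (1 - α k) x t

/-- `Z_x`, the spatial derivative of `Z`. -/
noncomputable def kerZx (n : ℕ) (α lam : Fin (n + 1) → ℝ) (x t : ℝ) : ℝ :=
  deriv (fun y => kerZ n α lam y t) x

/-- `Z_xx`, the second spatial derivative of `Z`. -/
noncomputable def kerZxx (n : ℕ) (α lam : Fin (n + 1) → ℝ) (x t : ℝ) : ℝ :=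
  deriv (fun y => kerZx n α lam y t) x

/-!
Each factor `h_j (t) = t⁻¹ W(-ℓ_j t ^ (-α_j); -α_j, 0)` is the inverse Laplace transform of
`exp (-ℓ_j s ^ α_j)`. Bending the Bromwich line onto the rays `arg s = ±θ` with `π / 2 < θ` and
`α_j θ < π / 2` shows that `h_j` is bounded, hence integrable near `0`. By Fubini's theorem the
integral of `h₁ ∗ ⋯ ∗ h_m` over `(0, δ)` is then the integral of `∏ h_j (x_j)` over the simplex
`{x > 0, ∑ x_j < δ}`, and the substitution `ζ_j = ℓ_j x_j ^ (-α_j)` together with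
`W(z; -α, 0) = -α z W(z; -α, 1 - α)` gives the identity.
-/

open scoped Convolution

lemma norm_cpow_mul_cexp_neg_mul (a r : ℂ) {t : ℝ} (ht : 0 < t) :
    ‖(t : ℂ) ^ a * Complex.exp (-(r * t))‖ = t ^ a.re * rexp (-r.re * t) := by
  rw [norm_mul, Complex.norm_cpow_eq_rpow_re_of_pos ht, Complex.norm_exp, Complex.neg_re,
    Complex.re_mul_ofReal, neg_mul]

lemma integrableOn_cpow_mul_cexp_neg_mul {a r : ℂ} (ha : -1 < a.re) (hr : 0 < r.re) :
    IntegrableOn (fun t : ℝ => (t : ℂ) ^ a * Complex.exp (-(r * t))) (Ioi 0) := by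
  have hbound : IntegrableOn (fun t : ℝ => t ^ a.re * rexp (-r.re * t)) (Ioi 0) := by
    simpa only [rpow_one] using integrableOn_rpow_mul_exp_neg_mul_rpow ha one_pos hr
  refine hbound.integrable.mono' (by fun_prop) ?_
  filter_upwards [ae_restrict_mem measurableSet_Ioi] with t ht
  exact (norm_cpow_mul_cexp_neg_mul a r ht).le

lemma differentiableOn_integral_cpow_mul_cexp_neg_mul {a : ℂ} (ha : -1 < a.re) :
    DifferentiableOn ℂ
      (fun r : ℂ => ∫ t in Ioi (0 : ℝ), (t : ℂ) ^ a * Complex.exp (-(r * t))) {r | 0 < r.re} := by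
  intro r (hr : 0 < r.re)
  have hnhds : {w : ℂ | r.re / 2 < w.re} ∈ 𝓝 r :=
    (isOpen_lt continuous_const Complex.continuous_re).mem_nhds (half_lt_self hr)
  have hbound : IntegrableOn (fun t : ℝ => t ^ (a + 1).re * rexp (-(r.re / 2) * t)) (Ioi 0) := by
    simpa only [rpow_one] using integrableOn_rpow_mul_exp_neg_mul_rpow
      (s := (a + 1).re) (by rw [Complex.add_re, Complex.one_re]; linarith) one_pos (half_pos hr)
  have hmeas (b w : ℂ) : AEStronglyMeasurable
      (fun t : ℝ => (t : ℂ) ^ b * Complex.exp (-(w * t))) (volume.restrict (Ioi 0)) := by fun_prop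
  refine (_root_.hasDerivAt_integral_of_dominated_loc_of_deriv_le hnhds
    (Eventually.of_forall (hmeas a)) (integrableOn_cpow_mul_cexp_neg_mul ha hr).integrable
    (F' := fun w t => -((t : ℂ) ^ (a + 1) * Complex.exp (-(w * t)))) (hmeas (a + 1) r).neg ?_
    hbound.integrable ?_
    ).2.differentiableAt.differentiableWithinAt
  · filter_upwards [ae_restrict_mem measurableSet_Ioi] with t (ht : 0 < t) w (hw : r.re / 2 < w.re)
    rw [norm_neg, norm_cpow_mul_cexp_neg_mul _ _ ht]
    gcongr
  · filter_upwards [ae_restrict_mem measurableSet_Ioi] with t (ht : 0 < t) w _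
    have hexp : HasDerivAt (fun w : ℂ => Complex.exp (-(w * t)))
        (Complex.exp (-(w * t)) * -(1 * t)) w := ((hasDerivAt_id w).mul_const (t : ℂ)).neg.cexp
    refine (hexp.const_mul _).congr_deriv ?_
    rw [Complex.cpow_add _ _ (Complex.ofReal_ne_zero.2 ht.ne'), Complex.cpow_one]
    ring

-- Both sides are holomorphic on the right half-plane and agree on the positive real axis.
lemma integral_cpow_mul_cexp_neg_mul_Ioi {a r : ℂ} (ha : 0 < a.re) (hr : 0 < r.re) :
    ∫ t in Ioi (0 : ℝ), (t : ℂ) ^ (a - 1) * Complex.exp (-(r * t)) =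
      (1 / r) ^ a * Complex.Gamma a := by
  have hopen : IsOpen {r : ℂ | 0 < r.re} := isOpen_lt continuous_const Complex.continuous_re
  have hlhs := (differentiableOn_integral_cpow_mul_cexp_neg_mul (a := a - 1)
    (by rw [Complex.sub_re, Complex.one_re]; linarith)).analyticOnNhd hopen
  have hrhs : AnalyticOnNhd ℂ (fun r : ℂ => (1 / r) ^ a * Complex.Gamma a) {r | 0 < r.re} := by
    refine DifferentiableOn.analyticOnNhd (fun r (hr : 0 < r.re) => ?_) hopen
    have hr0 : r ≠ 0 := fun h => hr.ne' (by rw [h, Complex.zero_re])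
    have hmem : 1 / r ∈ Complex.slitPlane := by
      refine Or.inl ?_
      rw [one_div, Complex.inv_re]
      exact div_pos hr (Complex.normSq_pos.2 hr0)
    exact ((((differentiableAt_const 1).div differentiableAt_id hr0).cpow_const hmem).mul_const
      _).differentiableWithinAt
  refine hlhs.eqOn_of_preconnected_of_frequently_eq hrhs
    (convex_halfSpace_re_gt 0).isPreconnected (z₀ := 1) (by simp) ?_ hr
  have hreal : Tendsto (fun x : ℝ => (x : ℂ)) (𝓝[≠] 1) (𝓝[≠] 1) := by
    refine tendsto_nhdsWithin_iff.2 ⟨?_, ?_⟩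
    · exact (Complex.continuous_ofReal.tendsto' 1 1 Complex.ofReal_one).mono_left nhdsWithin_le_nhds
    · filter_upwards [self_mem_nhdsWithin] with x hx
      exact Complex.ofReal_ne_one.2 hx
  refine hreal.frequently (Eventually.frequently ?_)
  filter_upwards [nhdsWithin_le_nhds (lt_mem_nhds one_pos)] with x hx
  exact Complex.integral_cpow_mul_exp_neg_mul_Ioi ha hx

lemma integrableOn_exp_mul_rpow_sub_mul {α c : ℝ} (hα0 : 0 ≤ α) (hα1 : α < 1) (hc : 0 < c)
    (w : ℝ) : IntegrableOn (fun y : ℝ => rexp (w * y ^ α - c * y)) (Ioi 0) := by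
  refine integrable_of_isBigO_exp_neg (half_pos hc) ?_ (Asymptotics.IsBigO.of_bound 1 ?_)
  · exact Continuous.continuousOn (by fun_prop (disch := assumption))
  have hsmall : ∀ᶠ y : ℝ in atTop, w * y ^ (-(1 - α)) < c / 2 := by
    have hlim := (tendsto_rpow_neg_atTop (sub_pos.2 hα1)).const_mul w
    rw [mul_zero] at hlim
    exact hlim.eventually_lt_const (half_pos hc)
  filter_upwards [hsmall, eventually_gt_atTop 0] with y hy hy0
  have hpow : y ^ α = y ^ (-(1 - α)) * y := by
    rw [← rpow_add_one hy0.ne']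
    ring_nf
  rw [norm_of_nonneg (exp_pos _).le, norm_of_nonneg (exp_pos _).le, one_mul, exp_le_exp, hpow]
  nlinarith

lemma hasSum_integral_cexp_mul_cpow {α : ℝ} (hα0 : 0 ≤ α) (hα1 : α < 1)
    (w : ℂ) {r : ℂ} (hr : 0 < r.re) :
    HasSum
      (fun k : ℕ => w ^ k / k.factorial *
        ((1 / r) ^ (α * k + 1 : ℂ) * Complex.Gamma (α * k + 1)))
      (∫ y in Ioi (0 : ℝ), Complex.exp (w * (y : ℂ) ^ (α : ℂ)) * Complex.exp (-(r * y))) := by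
  have hbound (y : ℝ) : HasSum
      (fun k : ℕ => rexp (-r.re * y) * ((‖w‖ * y ^ α) ^ k / k.factorial))
      (rexp (‖w‖ * y ^ α - r.re * y)) := by
    rw [sub_eq_neg_add, exp_add, ← neg_mul, Real.exp_eq_exp_ℝ]
    exact (NormedSpace.expSeries_div_hasSum_exp (‖w‖ * y ^ α)).mul_left _
  have hterm (k : ℕ) : ∫ y in Ioi (0 : ℝ),
      w ^ k / k.factorial * ((y : ℂ) ^ (α * k : ℂ) * Complex.exp (-(r * y))) =
      w ^ k / k.factorial * ((1 / r) ^ (α * k + 1 : ℂ) * Complex.Gamma (α * k + 1)) := by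
    have ha : 0 < (α * k + 1 : ℂ).re := by
      norm_cast
      positivity
    rw [MeasureTheory.integral_const_mul, ← integral_cpow_mul_cexp_neg_mul_Ioi ha hr,
      add_sub_cancel_right]
  simp_rw [← hterm]
  refine MeasureTheory.hasSum_integral_of_dominated_convergence
    (fun k (y : ℝ) => rexp (-r.re * y) * ((‖w‖ * y ^ α) ^ k / k.factorial))
    (fun k => by fun_prop) (fun k => ?_) (ae_of_all _ fun y => (hbound y).summable) ?_
    (ae_of_all _ fun y => ?_)
  · filter_upwards [ae_restrict_mem measurableSet_Ioi] with y (hy : 0 < y)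
    rw [norm_mul, norm_cpow_mul_cexp_neg_mul _ _ hy, norm_div, norm_pow, Complex.norm_natCast,
      Complex.re_ofReal_mul, Complex.natCast_re, rpow_mul_natCast hy.le, mul_pow]
    exact le_of_eq (by ring)
  · simp_rw [(hbound _).tsum_eq]
    exact integrableOn_exp_mul_rpow_sub_mul hα0 hα1 hr ‖w‖
  · have hexp := (NormedSpace.expSeries_div_hasSum_exp (w * (y : ℂ) ^ (α : ℂ))).mul_right
      (Complex.exp (-(r * y)))
    rw [← Complex.exp_eq_exp_ℂ] at hexp
    refine hexp.congr_fun fun k => ?_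
    rw [Complex.cpow_mul_nat, mul_pow]
    ring

lemma inv_Gamma_neg {s : ℝ} (hs : 0 ≤ s) :
    (Gamma (-s))⁻¹ = π⁻¹ * (Gamma (s + 1) * sin (π * (s + 1))) := by
  have hΓ : Gamma (s + 1) ≠ 0 := (Gamma_pos_of_pos (by linarith)).ne'
  have hrefl : Gamma (s + 1) * Gamma (-s) = π / sin (π * (s + 1)) := by
    rw [← Real.Gamma_mul_Gamma_one_sub, sub_add_cancel_right]
  rw [eq_div_of_mul_eq hΓ ((mul_comm _ _).trans hrefl), div_div, inv_div]
  ring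

lemma inv_neg_cexp_mul_I_cpow {θ : ℝ} (hθ : θ ∈ Ioo 0 (2 * π)) (a : ℂ) :
    (1 / -Complex.exp (θ * Complex.I)) ^ a = Complex.exp ((π - θ) * Complex.I * a) := by
  have hpolar : 1 / -Complex.exp (θ * Complex.I) = Complex.exp ((π - θ) * Complex.I) := by
    rw [sub_mul, Complex.exp_sub, Complex.exp_pi_mul_I, one_div_neg_eq_neg_one_div, neg_div]
  rw [hpolar, Complex.cpow_def_of_ne_zero (Complex.exp_ne_zero _), Complex.log_exp]
  all_goals
    simp only [Complex.mul_I_im, Complex.sub_re, Complex.ofReal_re]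
    linarith [hθ.1, hθ.2]

/-- The value at `t` of the inverse Laplace transform of `s ↦ exp (z * s ^ α)`, with the Bromwich
line bent onto the two rays `arg s = ±θ`. Their contributions are complex conjugate, so only the
upper ray, parametrized by `s = x * exp (θ * I)`, is integrated. -/
noncomputable def hankelRayIntegral (α θ z t : ℝ) : ℝ :=
  π⁻¹ * (Complex.exp (θ * Complex.I) *
    ∫ x in Ioi (0 : ℝ), Complex.exp (z * Complex.exp (α * θ * Complex.I) * (x : ℂ) ^ (α : ℂ)) *
      Complex.exp (Complex.exp (θ * Complex.I) * (t * x))).im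

lemma wrightW_zero_eq_hankelRayIntegral {α θ : ℝ} (hα0 : 0 ≤ α) (hα1 : α < 1)
    (hθ : θ ∈ Ioo (π / 2) (π + π / 2)) (z : ℝ) :
    wrightW α 0 z = hankelRayIntegral α θ z 1 := by
  have hre : 0 < (-Complex.exp (θ * Complex.I)).re := by
    rw [Complex.neg_re, Complex.exp_ofReal_mul_I_re]
    exact neg_pos.2 (cos_neg_of_pi_div_two_lt_of_lt hθ.1 hθ.2)
  have hsum := (hasSum_integral_cexp_mul_cpow hα0 hα1
    (z * Complex.exp (α * θ * Complex.I)) hre).mul_left (Complex.exp (θ * Complex.I))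
  simp only [neg_mul, neg_neg] at hsum
  have himsum := ((Complex.hasSum_iff _ _).1 hsum).2.mul_left π⁻¹
  simp only [hankelRayIntegral, Complex.ofReal_one, one_mul]
  rw [← himsum.tsum_eq, wrightW]
  refine tsum_congr fun k => ?_
  have hphase : Complex.exp (θ * Complex.I) * (Complex.exp (α * θ * Complex.I) ^ k *
      (1 / -Complex.exp (θ * Complex.I)) ^ (α * k + 1 : ℂ)) =
      Complex.exp ((π * (α * k + 1) : ℝ) * Complex.I) := by
    rw [inv_neg_cexp_mul_I_cpow ⟨by linarith [hθ.1, pi_pos], by linarith [hθ.2, pi_pos]⟩,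
      ← Complex.exp_nat_mul, ← Complex.exp_add, ← Complex.exp_add]
    push_cast
    ring_nf
  have hterm : Complex.exp (θ * Complex.I) * ((z * Complex.exp (α * θ * Complex.I)) ^ k /
      k.factorial * ((1 / -Complex.exp (θ * Complex.I)) ^ (α * k + 1 : ℂ) *
        Complex.Gamma (α * k + 1))) =
      ((z ^ k / k.factorial * Gamma (α * k + 1) : ℝ) : ℂ) *
        Complex.exp ((π * (α * k + 1) : ℝ) * Complex.I) := by
    rw [← hphase]
    push_cast [← Complex.Gamma_ofReal]
    ring
  rw [hterm, Complex.im_ofReal_mul, Complex.exp_ofReal_mul_I_im, zero_sub, div_mul_eq_div_div,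
    div_eq_mul_inv _ (Gamma _), inv_Gamma_neg (by positivity)]
  ring

lemma inv_mul_hankelRayIntegral_one {t : ℝ} (α θ z : ℝ) (ht : 0 < t) :
    t⁻¹ * hankelRayIntegral α θ (z * t ^ (-α)) 1 = hankelRayIntegral α θ z t := by
  have hscale := integral_comp_mul_left_Ioi' (fun y : ℝ =>
    Complex.exp ((z * t ^ (-α) : ℝ) * Complex.exp (α * θ * Complex.I) * (y : ℂ) ^ (α : ℂ)) *
      Complex.exp (Complex.exp (θ * Complex.I) * y)) 0 ht
  have hcancel (x : ℝ) (hx : 0 < x) :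
      ((z * t ^ (-α) : ℝ) : ℂ) * ((t * x : ℝ) : ℂ) ^ (α : ℂ) = z * (x : ℂ) ^ (α : ℂ) := by
    rw [← Complex.ofReal_cpow (by positivity), ← Complex.ofReal_cpow hx.le, mul_rpow ht.le hx.le,
      rpow_neg ht.le]
    norm_cast
    field_simp
  simp only [hankelRayIntegral, Complex.ofReal_one, one_mul]
  rw [mul_zero] at hscale
  rw [← hscale, mul_left_comm, mul_smul_comm, Complex.smul_im, smul_eq_mul,
    inv_mul_cancel_left₀ ht.ne']
  congr 3
  refine setIntegral_congr_fun measurableSet_Ioi fun x (hx : 0 < x) => ?_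
  rw [mul_right_comm _ (Complex.exp _), hcancel x hx, mul_right_comm, Complex.ofReal_mul]

lemma measurable_hankelRayIntegral (α θ z : ℝ) : Measurable (hankelRayIntegral α θ z) := by
  have hint : Measurable fun t : ℝ => ∫ x in Ioi (0 : ℝ),
      Complex.exp (z * Complex.exp (α * θ * Complex.I) * (x : ℂ) ^ (α : ℂ)) *
        Complex.exp (Complex.exp (θ * Complex.I) * (t * x)) :=
    (StronglyMeasurable.integral_prod_right (Measurable.stronglyMeasurable
      (by unfold Function.uncurry; fun_prop))).measurable
  exact (Complex.measurable_im.comp (hint.const_mul _)).const_mul _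

lemma abs_hankelRayIntegral_le {α θ z t : ℝ} (hα : 0 < α) (hz : z * cos (α * θ) < 0)
    (hθ : cos θ ≤ 0) (ht : 0 ≤ t) :
    |hankelRayIntegral α θ z t| ≤ π⁻¹ * ∫ x in Ioi (0 : ℝ), rexp (z * cos (α * θ) * x ^ α) := by
  have hint : IntegrableOn (fun x : ℝ => rexp (z * cos (α * θ) * x ^ α)) (Ioi 0) := by
    simpa using integrableOn_rpow_mul_exp_neg_mul_rpow (s := 0) (by norm_num) hα (neg_pos.2 hz)
  rw [hankelRayIntegral, abs_mul, abs_of_pos (inv_pos.2 pi_pos)]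
  gcongr
  refine (Complex.abs_im_le_norm _).trans ?_
  rw [norm_mul, Complex.norm_exp_ofReal_mul_I, one_mul]
  refine norm_integral_le_of_norm_le hint.integrable ?_
  filter_upwards [ae_restrict_mem measurableSet_Ioi] with x (hx : 0 < x)
  have hdecay : (Complex.exp (θ * Complex.I) * (t * x)).re ≤ 0 := by
    rw [← Complex.ofReal_mul, Complex.re_mul_ofReal, Complex.exp_ofReal_mul_I_re]
    exact mul_nonpos_of_nonpos_of_nonneg hθ (by positivity)
  have hre : (z * Complex.exp (α * θ * Complex.I) * (x : ℂ) ^ (α : ℂ)).re =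
      z * cos (α * θ) * x ^ α := by
    rw [← Complex.ofReal_cpow hx.le, Complex.re_mul_ofReal, Complex.re_ofReal_mul,
      ← Complex.ofReal_mul, Complex.exp_ofReal_mul_I_re]
  rw [norm_mul, Complex.norm_exp, Complex.norm_exp, hre]
  exact mul_le_of_le_one_right (exp_pos _).le (exp_le_one_iff.2 hdecay)

lemma integrableOn_inv_mul_wrightW_zero {α ℓ : ℝ} (hα0 : 0 < α) (hα1 : α < 1) (hℓ : 0 < ℓ)
    (δ : ℝ) : IntegrableOn (fun t : ℝ => t⁻¹ * wrightW α 0 (-ℓ * t ^ (-α))) (Ioo 0 δ) := by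
  -- A ray with `π / 2 < θ` and `α * θ < π / 2` makes both exponential factors decay.
  obtain ⟨θ, hθ0, hθ1⟩ : ∃ θ, π / 2 < θ ∧ θ < min π (π / 2 / α) := by
    refine exists_between (lt_min (half_lt_self pi_pos) ?_)
    rw [lt_div_iff₀ hα0]
    exact mul_lt_of_lt_one_right (half_pos pi_pos) hα1
  obtain ⟨hθπ, hαθ⟩ := lt_min_iff.1 hθ1
  rw [lt_div_iff₀' hα0] at hαθ
  have hθpos : 0 < θ := (half_pos pi_pos).trans hθ0
  have hcosαθ : 0 < cos (α * θ) := cos_pos_of_mem_Ioo ⟨by linarith [mul_pos hα0 hθpos, pi_pos], hαθ⟩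
  have hcosθ : cos θ ≤ 0 := cos_nonpos_of_pi_div_two_le_of_le hθ0.le (by linarith [pi_pos])
  have heq : EqOn (hankelRayIntegral α θ (-ℓ))
      (fun t => t⁻¹ * wrightW α 0 (-ℓ * t ^ (-α))) (Ioo 0 δ) := fun t ht => by
    simp only [wrightW_zero_eq_hankelRayIntegral hα0.le hα1 ⟨hθ0, by linarith [pi_pos]⟩,
      inv_mul_hankelRayIntegral_one α θ (-ℓ) ht.1]
  refine IntegrableOn.congr_fun ?_ heq measurableSet_Ioo
  refine IntegrableOn.of_bound measure_Ioo_lt_top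
    (measurable_hankelRayIntegral α θ (-ℓ)).aestronglyMeasurable
    (π⁻¹ * ∫ x in Ioi (0 : ℝ), rexp (-ℓ * cos (α * θ) * x ^ α)) ?_
  filter_upwards [ae_restrict_mem measurableSet_Ioo] with t ht
  exact abs_hankelRayIntegral_le hα0 (mul_neg_of_neg_of_pos (neg_neg_iff_pos.2 hℓ) hcosαθ)
    hcosθ ht.1.le

/-- The open corner simplex of size `δ`: points with positive coordinates whose sum is less
than `δ`. -/
def cornerSimplex (ι : Type*) [Fintype ι] (δ : ℝ) : Set (ι → ℝ) :=
  {x | (∀ i, 0 < x i) ∧ ∑ i, x i < δ}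

lemma measurableSet_cornerSimplex (ι : Type*) [Fintype ι] (δ : ℝ) :
    MeasurableSet (cornerSimplex ι δ) := by
  unfold cornerSimplex
  measurability

lemma cornerSimplex_subset_pi_Ioo (ι : Type*) [Fintype ι] (δ : ℝ) :
    cornerSimplex ι δ ⊆ univ.pi fun _ => Ioo 0 δ := fun _ hx i _ =>
  ⟨hx.1 i, (Finset.single_le_sum (fun j _ => (hx.1 j).le) (Finset.mem_univ i)).trans_lt hx.2⟩

lemma cornerSimplex_unique (ι : Type*) [Fintype ι] [Unique ι] (δ : ℝ) :
    cornerSimplex ι δ = (fun x => x default) ⁻¹' Ioo 0 δ := by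
  ext x
  simp [cornerSimplex, Unique.forall_iff]

lemma snoc_mem_cornerSimplex {n : ℕ} {δ r : ℝ} {x : Fin n → ℝ} :
    (Fin.snoc x r : Fin (n + 1) → ℝ) ∈ cornerSimplex (Fin (n + 1)) δ ↔
      r ∈ Ioo 0 δ ∧ x ∈ cornerSimplex (Fin n) (δ - r) := by
  simp only [cornerSimplex, mem_ofPred_eq, Fin.forall_fin_succ', Fin.sum_univ_castSucc,
    Fin.snoc_castSucc, Fin.snoc_last, mem_Ioo, lt_sub_iff_add_lt]
  constructor
  · rintro ⟨⟨hx, hr⟩, hsum⟩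
    have hnonneg : 0 ≤ ∑ i, x i := Finset.sum_nonneg fun i _ => (hx i).le
    exact ⟨⟨hr, by linarith⟩, hx, hsum⟩
  · rintro ⟨⟨hr, -⟩, hx, hsum⟩
    exact ⟨⟨hx, hr⟩, hsum⟩

lemma setIntegral_cornerSimplex_succ {E : Type*} [NormedAddCommGroup E] [NormedSpace ℝ E]
    {n : ℕ} {δ : ℝ} {φ : (Fin (n + 1) → ℝ) → E}
    (hφ : IntegrableOn φ (cornerSimplex (Fin (n + 1)) δ)) :
    ∫ x in cornerSimplex (Fin (n + 1)) δ, φ x =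
      ∫ r in Ioo 0 δ, ∫ x in cornerSimplex (Fin n) (δ - r), φ (Fin.snoc x r) := by
  have hpres := (volume_preserving_piFinSuccAbove (fun _ : Fin (n + 1) => ℝ) (Fin.last n)).symm
  have hint := hpres.integrable_comp_of_integrable
    ((integrable_indicator_iff (measurableSet_cornerSimplex _ _)).2 hφ)
  have hind (r : ℝ) (x : Fin n → ℝ) : (cornerSimplex (Fin (n + 1)) δ).indicator φ
      ((MeasurableEquiv.piFinSuccAbove (fun _ => ℝ) (Fin.last n)).symm (r, x)) =
        (Ioo 0 δ).indicator (fun r => (cornerSimplex (Fin n) (δ - r)).indicator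
          (fun x => φ (Fin.snoc x r)) x) r := by
    have hsnoc : (MeasurableEquiv.piFinSuccAbove (fun _ => ℝ) (Fin.last n)).symm (r, x) =
      Fin.snoc x r := Fin.insertNth_last' r x
    rw [hsnoc]
    simp only [indicator]
    grind [snoc_mem_cornerSimplex]
  rw [Function.comp_def] at hint
  rw [← MeasureTheory.integral_indicator (measurableSet_cornerSimplex _ _), ← hpres.integral_comp',
    Measure.volume_eq_prod, integral_prod _ hint,
    ← MeasureTheory.integral_indicator measurableSet_Ioo]
  refine integral_congr_ae (ae_of_all _ fun r => ?_)
  simp only [hind]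
  by_cases hr : r ∈ Ioo 0 δ <;>
    simp [hr, MeasureTheory.integral_indicator (measurableSet_cornerSimplex _ _)]

lemma laplaceConv_eq_convolution (f g : ℝ → ℝ) {δ t : ℝ} (ht : t ∈ Ioo 0 δ) :
    laplaceConv f g t = ((Ioo 0 δ).indicator f ⋆[ContinuousLinearMap.mul ℝ ℝ]
      (Ioo 0 δ).indicator g) t := by
  rw [laplaceConv, integral_of_le ht.1.le, integral_Ioc_eq_integral_Ioo, convolution_def,
    ← MeasureTheory.integral_indicator measurableSet_Ioo]
  refine integral_congr_ae (ae_of_all _ fun s => ?_)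
  have hmem : s ∈ Ioo 0 t ↔ s ∈ Ioo 0 δ ∧ t - s ∈ Ioo 0 δ := by grind
  simp only [indicator, ContinuousLinearMap.mul_apply']
  grind

lemma integrableOn_laplaceConv {f g : ℝ → ℝ} {δ : ℝ} (hf : IntegrableOn f (Ioo 0 δ))
    (hg : IntegrableOn g (Ioo 0 δ)) : IntegrableOn (laplaceConv f g) (Ioo 0 δ) :=
  ((hf.integrable_indicator measurableSet_Ioo).integrable_convolution _
    (hg.integrable_indicator measurableSet_Ioo)).integrableOn.congr_fun
    (fun _ ht => (laplaceConv_eq_convolution f g ht).symm) measurableSet_Ioo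

lemma setIntegral_laplaceConv {f g : ℝ → ℝ} {δ : ℝ} (hf : IntegrableOn f (Ioo 0 δ))
    (hg : IntegrableOn g (Ioo 0 δ)) :
    ∫ t in Ioo 0 δ, laplaceConv f g t =
      ∫ r in Ioo 0 δ, g r * ∫ s in Ioo 0 (δ - r), f s := by
  have hint : Integrable (Function.uncurry fun t r =>
      (Ioo 0 δ).indicator g r * (Ioo 0 δ).indicator f (t - r))
      ((volume.restrict (Ioo 0 δ)).prod volume) :=
    ((hg.integrable_indicator measurableSet_Ioo).convolution_integrand
      (ContinuousLinearMap.mul ℝ ℝ) (hf.integrable_indicator measurableSet_Ioo)).mono_measure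
        (Measure.prod_mono Measure.restrict_le_self le_rfl)
  have hinner (r : ℝ) (hr : 0 < r) :
      ∫ t in Ioo 0 δ, (Ioo 0 δ).indicator f (t - r) = ∫ s in Ioo 0 (δ - r), f s := by
    have hshift (t : ℝ) : (Ioo 0 δ).indicator (fun t => (Ioo 0 δ).indicator f (t - r)) t =
        (Ioo 0 (δ - r)).indicator f (t - r) := by
      simp only [indicator, mem_Ioo]
      grind
    rw [← MeasureTheory.integral_indicator measurableSet_Ioo, funext hshift,
      integral_sub_right_eq_self, MeasureTheory.integral_indicator measurableSet_Ioo]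
  calc ∫ t in Ioo 0 δ, laplaceConv f g t
    _ = ∫ t in Ioo 0 δ, ∫ r, (Ioo 0 δ).indicator g r * (Ioo 0 δ).indicator f (t - r) := by
      refine setIntegral_congr_fun measurableSet_Ioo fun t ht => ?_
      simp only [laplaceConv_eq_convolution f g ht, convolution_mul_swap, mul_comm]
    _ = ∫ r, (Ioo 0 δ).indicator g r * ∫ t in Ioo 0 δ, (Ioo 0 δ).indicator f (t - r) := by
      simp_rw [integral_integral_swap hint, MeasureTheory.integral_const_mul]
    _ = ∫ r in Ioo 0 δ, g r * ∫ s in Ioo 0 (δ - r), f s := by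
      rw [← MeasureTheory.integral_indicator measurableSet_Ioo]
      refine integral_congr_ae (ae_of_all _ fun r => ?_)
      by_cases hr : r ∈ Ioo 0 δ
      · simp [hr, hinner r hr.1]
      · simp [hr]

lemma integrableOn_iterConv {δ : ℝ} : ∀ (n : ℕ) {h : Fin (n + 1) → ℝ → ℝ},
    (∀ i, IntegrableOn (h i) (Ioo 0 δ)) → IntegrableOn (iterConv n h) (Ioo 0 δ)
  | 0, _, hh => hh 0
  | n + 1, _, hh =>
    integrableOn_laplaceConv (integrableOn_iterConv n fun i => hh i.castSucc) (hh (Fin.last _))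

lemma integrableOn_prod_cornerSimplex {ι : Type*} [Fintype ι] {δ : ℝ} {h : ι → ℝ → ℝ}
    (hh : ∀ i, IntegrableOn (h i) (Ioo 0 δ)) :
    IntegrableOn (fun x : ι → ℝ => ∏ i, h i (x i)) (cornerSimplex ι δ) := by
  refine IntegrableOn.mono_set ?_ (cornerSimplex_subset_pi_Ioo ι δ)
  rw [IntegrableOn, volume_pi, Measure.restrict_pi_pi]
  exact Integrable.fintype_prod hh

lemma setIntegral_iterConv (n : ℕ) {h : Fin (n + 1) → ℝ → ℝ} {δ : ℝ}
    (hh : ∀ i, IntegrableOn (h i) (Ioo 0 δ)) :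
    ∫ t in Ioo 0 δ, iterConv n h t =
      ∫ x in cornerSimplex (Fin (n + 1)) δ, ∏ i, h i (x i) := by
  induction n generalizing δ with
  | zero =>
    have hpres := volume_preserving_funUnique (Fin 1) ℝ
    change ∫ t in Ioo 0 δ, h 0 t = ∫ x in cornerSimplex (Fin 1) δ, ∏ i : Fin 1, h i (x i)
    simp only [cornerSimplex_unique, Fin.prod_univ_one]
    exact (hpres.setIntegral_preimage_emb (MeasurableEquiv.measurableEmbedding _) (h 0) _).symm
  | succ n ih =>
    rw [iterConv, setIntegral_laplaceConv (integrableOn_iterConv n fun i => hh i.castSucc)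
      (hh (Fin.last (n + 1))), setIntegral_cornerSimplex_succ (integrableOn_prod_cornerSimplex hh)]
    refine setIntegral_congr_fun measurableSet_Ioo fun r hr => ?_
    have hsub : Ioo 0 (δ - r) ⊆ Ioo 0 δ := Ioo_subset_Ioo_right (sub_le_self δ hr.1.le)
    simp only [Fin.prod_univ_castSucc (n := n + 1), Fin.snoc_castSucc, Fin.snoc_last,
      MeasureTheory.integral_mul_const, ih fun i => (hh i.castSucc).mono_set hsub]
    exact mul_comm _ _

lemma setIntegral_image_piMap {ι E : Type*} [Fintype ι] [NormedAddCommGroup E]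
    [NormedSpace ℝ E] {s : Set (ι → ℝ)} {f f' : ι → ℝ → ℝ} (hs : MeasurableSet s)
    (hf : ∀ x ∈ s, ∀ i, HasDerivAt (f i) (f' i (x i)) (x i)) (hinj : InjOn (Pi.map f) s)
    (g : (ι → ℝ) → E) :
    ∫ y in Pi.map f '' s, g y = ∫ x in s, (∏ i, |f' i (x i)|) • g (Pi.map f x) := by
  have hderiv (x : ι → ℝ) (hx : x ∈ s) : HasFDerivWithinAt (Pi.map f)
      (ContinuousLinearMap.pi fun i => (ContinuousLinearMap.toSpanSingleton ℝ (f' i (x i))).comp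
        (ContinuousLinearMap.proj i)) s x :=
    (hasFDerivAt_pi.2 fun i => (hf x hx i).hasFDerivAt.comp x
      (hasFDerivAt_apply i x)).hasFDerivWithinAt
  rw [integral_image_eq_integral_abs_det_fderiv_smul volume hs hderiv hinj]
  simp [ContinuousLinearMap.det_pi, Finset.abs_prod]

lemma wrightW_zero_eq (α z : ℝ) : wrightW α 0 z = -α * z * wrightW α (1 - α) z := by
  rcases eq_or_ne α 0 with rfl | hα
  · simp [wrightW]
  rw [wrightW, wrightW, ← tsum_mul_left, ← Nat.succ_injective.tsum_eq]
  · refine tsum_congr fun k => ?_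
    have hΓ : Gamma (1 - α - α * k) = -(α * (k + 1)) * Gamma (0 - α * (k + 1)) := by
      rw [zero_sub, ← Real.Gamma_add_one (neg_ne_zero.2 (by positivity))]
      ring_nf
    rw [hΓ, Nat.succ_eq_add_one, Nat.factorial_succ]
    push_cast
    by_cases h : Gamma (0 - α * (k + 1)) = 0
    · rw [h]
      simp
    · field_simp
      ring
  · rintro (_ | k) hk
    · simp at hk
    · exact ⟨k, rfl⟩

lemma inv_mul_wrightW_zero_eq {α ℓ x : ℝ} (hα : 0 < α) (hℓ : 0 < ℓ) (hx : 0 < x) :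
    x⁻¹ * wrightW α 0 (-ℓ * x ^ (-α)) =
      |ℓ * (-α * x ^ (-α - 1))| * wrightW α (1 - α) (-(ℓ * x ^ (-α))) := by
  rw [abs_mul, abs_mul, abs_neg, abs_of_pos hℓ, abs_of_pos hα, abs_of_pos (rpow_pos_of_pos hx _),
    wrightW_zero_eq, rpow_sub_one hx.ne']
  ring_nf

lemma div_mul_rpow_neg_rpow_inv {α ℓ x : ℝ} (hα : α ≠ 0) (hℓ : ℓ ≠ 0) (hx : 0 ≤ x) :
    (ℓ / (ℓ * x ^ (-α))) ^ α⁻¹ = x := by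
  rw [div_mul_cancel_left₀ hℓ, ← rpow_neg hx, neg_neg, rpow_rpow_inv hx hα]

lemma mul_div_rpow_inv_rpow_neg {α ℓ ζ : ℝ} (hα : α ≠ 0) (hℓ : 0 < ℓ) (hζ : 0 < ζ) :
    ℓ * ((ℓ / ζ) ^ α⁻¹) ^ (-α) = ζ := by
  rw [rpow_neg (by positivity), rpow_inv_rpow (by positivity) hα]
  field_simp

lemma image_cornerSimplex {ι : Type*} [Fintype ι] {α ℓ : ι → ℝ} (hα : ∀ i, α i ≠ 0)
    (hℓ : ∀ i, 0 < ℓ i) (δ : ℝ) :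
    Pi.map (fun i x => ℓ i * x ^ (-α i)) '' cornerSimplex ι δ =
      {ζ | (∀ i, 0 < ζ i) ∧ ∑ i, (ℓ i / ζ i) ^ (α i)⁻¹ < δ} := by
  ext ζ
  constructor
  · rintro ⟨x, ⟨hx, hsum⟩, rfl⟩
    refine ⟨fun i => mul_pos (hℓ i) (rpow_pos_of_pos (hx i) _), ?_⟩
    simpa only [Pi.map_apply, div_mul_rpow_neg_rpow_inv (hα _) (hℓ _).ne' (hx _).le] using hsum
  · rintro ⟨hζ, hsum⟩
    exact ⟨fun i => (ℓ i / ζ i) ^ (α i)⁻¹,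
      ⟨fun i => rpow_pos_of_pos (div_pos (hℓ i) (hζ i)) _, hsum⟩,
      funext fun i => mul_div_rpow_inv_rpow_neg (hα i) (hℓ i) (hζ i)⟩

lemma injOn_mul_rpow_neg_cornerSimplex {ι : Type*} [Fintype ι] {α ℓ : ι → ℝ}
    (hα : ∀ i, α i ≠ 0) (hℓ : ∀ i, ℓ i ≠ 0) (δ : ℝ) :
    InjOn (Pi.map fun i x => ℓ i * x ^ (-α i)) (cornerSimplex ι δ) :=
  LeftInvOn.injOn (f₁' := fun ζ i => (ℓ i / ζ i) ^ (α i)⁻¹) fun _ hx =>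
    funext fun i => div_mul_rpow_neg_rpow_inv (hα i) (hℓ i) (hx.1 i).le

lemma setIntegral_cornerSimplex_prod_inv_mul_wrightW_zero {ι : Type*} [Fintype ι]
    {α ℓ : ι → ℝ} (hα : ∀ i, 0 < α i) (hℓ : ∀ i, 0 < ℓ i) (δ : ℝ) :
    ∫ x in cornerSimplex ι δ, ∏ i, (x i)⁻¹ * wrightW (α i) 0 (-ℓ i * x i ^ (-α i)) =
      ∫ ζ in {ζ : ι → ℝ | (∀ i, 0 < ζ i) ∧ ∑ i, (ℓ i / ζ i) ^ (α i)⁻¹ < δ},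
        ∏ i, wrightW (α i) (1 - α i) (-ζ i) := by
  have hα0 (i : ι) : α i ≠ 0 := (hα i).ne'
  rw [← image_cornerSimplex hα0 hℓ,
    setIntegral_image_piMap (f' := fun i x => ℓ i * (-α i * x ^ (-α i - 1)))
      (measurableSet_cornerSimplex ι δ)
      (fun x hx i => (hasDerivAt_rpow_const (Or.inl (hx.1 i).ne')).const_mul (ℓ i))
      (injOn_mul_rpow_neg_cornerSimplex hα0 (fun i => (hℓ i).ne') δ)]
  refine setIntegral_congr_fun (measurableSet_cornerSimplex ι δ) fun x hx => ?_
  simp only [Pi.map_apply, smul_eq_mul, ← Finset.prod_mul_distrib,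
    inv_mul_wrightW_zero_eq (hα _) (hℓ _) (hx.1 _)]

theorem Sconv_integral_identity_general
    (m : ℕ) (α : Fin (m + 1) → ℝ)
    (hpos : ∀ j, 0 < α j) (hlt1 : ∀ j, α j < 1)
    (ℓ : Fin (m + 1) → ℝ) (hℓ : ∀ j, 0 < ℓ j)
    (t δ : ℝ) (hδ : 0 ≤ δ) :
    ∫ τ in (t - δ)..t, Sconv m 0 α ℓ (t - τ) =
      ∫ ζ in {ζ : Fin (m + 1) → ℝ |
          (∀ i, 0 < ζ i) ∧ ∑ k, (ℓ k / ζ k) ^ (α k)⁻¹ < δ},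
        ∏ i, wrightW (α i) (1 - α i) (-(ζ i)) := by
  calc ∫ τ in (t - δ)..t, Sconv m 0 α ℓ (t - τ)
    _ = ∫ s in Ioo 0 δ, Sconv m 0 α ℓ s := by
      rw [integral_comp_sub_left, sub_self, sub_sub_cancel, integral_of_le hδ,
        integral_Ioc_eq_integral_Ioo]
    _ = ∫ x in cornerSimplex (Fin (m + 1)) δ,
        ∏ i, (x i)⁻¹ * wrightW (α i) 0 (-ℓ i * x i ^ (-α i)) := by
      simp only [Sconv, ite_self, zero_sub, rpow_neg_one]
      exact setIntegral_iterConv m fun i =>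
        integrableOn_inv_mul_wrightW_zero (hpos i) (hlt1 i) (hℓ i) δ
    _ = _ := setIntegral_cornerSimplex_prod_inv_mul_wrightW_zero hpos hℓ δ

/-- Integral identity for the iterated convolution `S⁰_m`:
`∫_{t-δ}^t S⁰_m(t-τ; -ℓ₁,…,-ℓ_m; -α₁,…,-α_m) dτ` equals the integral of
`∏ᵢ W(-ζᵢ; -αᵢ, 1-αᵢ)` over the region
`D = {ζ ∈ (0,∞)^m : ∑ₖ (ℓₖ/ζₖ)^{1/αₖ} < δ}`. -/
theorem Sconv_integral_identity
    (m : ℕ) (α : Fin (m + 1) → ℝ)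
    (hmono : StrictMono α) (hpos : ∀ j, 0 < α j) (hlt1 : ∀ j, α j < 1)
    (ℓ : Fin (m + 1) → ℝ) (hℓ : ∀ j, 0 < ℓ j)
    (t δ : ℝ) (ht : 0 < t) (hδ : δ ∈ Set.Ioo 0 t) :
    ∫ τ in (t - δ)..t, Sconv m 0 α ℓ (t - τ) =
      ∫ ζ in {ζ : Fin (m + 1) → ℝ |
          (∀ i, 0 < ζ i) ∧ ∑ k, (ℓ k / ζ k) ^ (α k)⁻¹ < δ},
        ∏ i, wrightW (α i) (1 - α i) (-(ζ i)) :=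
  Sconv_integral_identity_general m α hpos hlt1 ℓ hℓ t δ hδ.1.le
end

section
/- Positivity of the iterated convolution S⁰_m: For all positive parameters ℓ₁,…,ℓ_m > 0 and all t > 0, S⁰_m(t;−ℓ₁,…,−ℓ_m;−α₁,…,−α_m) > 0. -/
open MeasureTheory Real Filter Set Topology intervalIntegral

/-!
By the reflection formula, `π W(-z; -α, 0)` is the imaginary part of the integral of
`exp (s - z s ^ α) ds` along the upper side of the negative axis. That contour is deformed to the
steepest-descent curve, on which `s - z s ^ α = -u` is real; there the integral becomes Zolotarev's
`W(-z; -α, 0) = α / ((1 - α) π) ∫₀^π u exp (-u) dθ`, `u = z ^ (1 / (1 - α)) · zolotarev α θ`, whose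
integrand is positive. Bounding `u exp (-u)` by a power of `u` also gives
`W(-z; -α, 0) = O(z ^ (-1 / α))`, so that each `h_j` stays bounded as `t → 0` and its convolutions
are convergent integrals of positive functions.
-/

section LaplaceConvolution

theorem laplaceConv_eq_mul_integral (f g : ℝ → ℝ) (t : ℝ) :
    laplaceConv f g t = t * ∫ u in (0 : ℝ)..1, f (t * u) * g (t - t * u) := by
  simpa [laplaceConv] using
    (intervalIntegral.smul_integral_comp_mul_left (a := 0) (b := 1)
      (fun τ => f τ * g (t - τ)) t).symm

theorem measurable_laplaceConv {f g : ℝ → ℝ} (hf : Measurable f) (hg : Measurable g) :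
    Measurable (laplaceConv f g) := by
  have hfg : Measurable fun p : ℝ × ℝ => f (p.1 * p.2) * g (p.1 - p.1 * p.2) := by fun_prop
  have hint : Measurable fun t => ∫ u in Ioc (0 : ℝ) 1, f (t * u) * g (t - t * u) :=
    hfg.stronglyMeasurable.integral_prod_right.measurable
  simp only [funext (laplaceConv_eq_mul_integral f g), intervalIntegral.integral_of_le zero_le_one]
  exact measurable_id.mul hint

/-- The class of kernels in which the positivity argument runs: measurable functions that are
positive on `(0, ∞)` and bounded on each `(0, T]`. It is stable under `laplaceConv`, the
boundedness being what makes the convolution integrals converge. -/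
structure IsPosLocBdd (f : ℝ → ℝ) : Prop where
  measurable : Measurable f
  pos : ∀ t, 0 < t → 0 < f t
  le : ∀ T, ∃ C, ∀ t, 0 < t → t ≤ T → f t ≤ C

namespace IsPosLocBdd

variable {f g : ℝ → ℝ}

theorem exists_mul_mem_Ioc (hf : IsPosLocBdd f) (hg : IsPosLocBdd g) (T : ℝ) :
    ∃ C, ∀ t, 0 < t → t ≤ T → ∀ u ∈ Ioo (0 : ℝ) 1, f (t * u) * g (t - t * u) ∈ Ioc 0 C := by
  obtain ⟨A, hA⟩ := hf.le T
  obtain ⟨B, hB⟩ := hg.le T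
  refine ⟨A * B, fun t ht htT u hu => ?_⟩
  have hl : 0 < t * u := mul_pos ht hu.1
  have hr : 0 < t - t * u := by nlinarith [hu.2]
  have hfA := hA (t * u) hl (by linarith)
  exact ⟨mul_pos (hf.pos _ hl) (hg.pos _ hr), mul_le_mul hfA (hB _ hr (by linarith))
    (hg.pos _ hr).le ((hf.pos _ hl).le.trans hfA)⟩

theorem intervalIntegrable_mul (hf : IsPosLocBdd f) (hg : IsPosLocBdd g) {t : ℝ} (ht : 0 < t) :
    IntervalIntegrable (fun u => f (t * u) * g (t - t * u)) volume 0 1 := by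
  obtain ⟨C, hC⟩ := hf.exists_mul_mem_Ioc hg t
  have := hf.measurable
  have := hg.measurable
  rw [intervalIntegrable_iff_integrableOn_Ioo_of_le zero_le_one]
  refine Measure.integrableOn_of_bounded (M := C) (by simp) (by fun_prop) ?_
  filter_upwards [ae_restrict_mem measurableSet_Ioo] with u hu
  obtain ⟨hpos, hle⟩ := hC t ht le_rfl u hu
  rwa [Real.norm_of_nonneg hpos.le]

theorem laplaceConv_pos (hf : IsPosLocBdd f) (hg : IsPosLocBdd g) {t : ℝ} (ht : 0 < t) :
    0 < laplaceConv f g t := by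
  obtain ⟨C, hC⟩ := hf.exists_mul_mem_Ioc hg t
  rw [laplaceConv_eq_mul_integral]
  exact mul_pos ht (intervalIntegral.intervalIntegral_pos_of_pos_on
    (hf.intervalIntegrable_mul hg ht) (fun u hu => (hC t ht le_rfl u hu).1) zero_lt_one)

theorem laplaceConv_le (hf : IsPosLocBdd f) (hg : IsPosLocBdd g) (T : ℝ) :
    ∃ C, ∀ t, 0 < t → t ≤ T → laplaceConv f g t ≤ C := by
  obtain ⟨C, hC⟩ := hf.exists_mul_mem_Ioc hg T
  refine ⟨T * C, fun t ht htT => ?_⟩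
  have hC0 : 0 ≤ C :=
    have h := hC t ht htT (1 / 2) ⟨by norm_num, by norm_num⟩
    h.1.le.trans h.2
  have hint : ∫ u in (0 : ℝ)..1, f (t * u) * g (t - t * u) ≤ ∫ _ in (0 : ℝ)..1, C :=
    intervalIntegral.integral_mono_on_of_le_Ioo zero_le_one (hf.intervalIntegrable_mul hg ht)
      intervalIntegrable_const fun u hu => (hC t ht htT u hu).2
  rw [laplaceConv_eq_mul_integral]
  calc t * ∫ u in (0 : ℝ)..1, f (t * u) * g (t - t * u) ≤ t * C :=
        mul_le_mul_of_nonneg_left (by simpa using hint) ht.le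
    _ ≤ T * C := mul_le_mul_of_nonneg_right htT hC0

protected theorem laplaceConv (hf : IsPosLocBdd f) (hg : IsPosLocBdd g) :
    IsPosLocBdd (laplaceConv f g) :=
  ⟨measurable_laplaceConv hf.measurable hg.measurable, fun _ => hf.laplaceConv_pos hg,
    hf.laplaceConv_le hg⟩

protected theorem iterConv :
    ∀ (n : ℕ) (h : Fin (n + 1) → ℝ → ℝ), (∀ j, IsPosLocBdd (h j)) → IsPosLocBdd (iterConv n h)
  | 0, _, hh => hh 0
  | n + 1, _, hh =>
    (IsPosLocBdd.iterConv n _ fun i => hh i.castSucc).laplaceConv (hh (Fin.last (n + 1)))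

end IsPosLocBdd

end LaplaceConvolution

section HankelIntegral

variable {α : ℝ}

theorem eventually_mul_rpow_le (hα : α < 1) (a : ℝ) {c : ℝ} (hc : 0 < c) :
    ∀ᶠ r : ℝ in atTop, a * r ^ α ≤ c * r := by
  have hlim : Tendsto (fun r : ℝ => a * r ^ (-(1 - α))) atTop (𝓝 0) := by
    simpa using (tendsto_rpow_neg_atTop (sub_pos.2 hα)).const_mul a
  filter_upwards [hlim.eventually (gt_mem_nhds hc), eventually_gt_atTop 0] with r hr hr0
  calc a * r ^ α = a * r ^ (-(1 - α)) * r := by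
        rw [mul_assoc, ← Real.rpow_add_one hr0.ne']
        ring_nf
    _ ≤ c * r := mul_le_mul_of_nonneg_right hr.le hr0.le

theorem integrableOn_exp_neg_add_mul_rpow (hα0 : 0 ≤ α) (hα : α < 1) (a : ℝ) :
    IntegrableOn (fun r : ℝ => Real.exp (-r + a * r ^ α)) (Ioi 0) := by
  refine integrable_of_isBigO_exp_neg (b := 1 / 2) (by norm_num) ?_ (.of_bound 1 ?_)
  · have := Real.continuous_rpow_const hα0
    fun_prop
  · filter_upwards [eventually_mul_rpow_le hα a one_half_pos] with r hr
    simp only [Real.norm_eq_abs, Real.abs_exp, one_mul, Real.exp_le_exp]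
    linarith

theorem integrableOn_cexp_neg_add_mul_rpow (hα0 : 0 ≤ α) (hα : α < 1) (w : ℂ) :
    IntegrableOn (fun r : ℝ => Complex.exp (-r + w * (r ^ α : ℝ))) (Ioi 0) := by
  have := Real.continuous_rpow_const hα0
  refine (integrableOn_exp_neg_add_mul_rpow hα0 hα w.re).mono'
    (Continuous.aestronglyMeasurable (by fun_prop)) (.of_forall fun r => ?_)
  simp [Complex.norm_exp]

theorem integral_exp_neg_mul_rpow_pow (hα0 : 0 ≤ α) (k : ℕ) :
    ∫ r in Ioi (0 : ℝ), Real.exp (-r) * (r ^ α) ^ k = Real.Gamma (α * k + 1) := by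
  rw [Real.Gamma_eq_integral (by positivity)]
  refine setIntegral_congr_fun measurableSet_Ioi fun r hr => ?_
  simp only [add_sub_cancel_right, Real.rpow_mul_natCast (le_of_lt hr)]

theorem hasSum_integral_cexp_neg_add_mul_rpow (hα0 : 0 ≤ α) (hα : α < 1) (w : ℂ) :
    HasSum (fun k : ℕ => (Real.Gamma (α * k + 1) : ℂ) * (w ^ k / k.factorial))
      (∫ r in Ioi (0 : ℝ), Complex.exp (-r + w * (r ^ α : ℝ))) := by
  have := Real.continuous_rpow_const hα0
  have hexp (a b : ℝ) :
      HasSum (fun k : ℕ => Real.exp a * (b ^ k / k.factorial)) (Real.exp (a + b)) := by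
    rw [Real.exp_add, Real.exp_eq_exp_ℝ]
    exact (NormedSpace.expSeries_div_hasSum_exp b).mul_left _
  have hcexp (a b : ℂ) :
      HasSum (fun k : ℕ => Complex.exp a * (b ^ k / k.factorial)) (Complex.exp (a + b)) := by
    rw [Complex.exp_add, Complex.exp_eq_exp_ℂ]
    exact (NormedSpace.expSeries_div_hasSum_exp b).mul_left _
  have hterm (k : ℕ) : ∫ r in Ioi (0 : ℝ),
      Complex.exp (-r) * ((w * (r ^ α : ℝ)) ^ k / k.factorial)
        = (Real.Gamma (α * k + 1) : ℂ) * (w ^ k / k.factorial) := by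
    rw [← integral_exp_neg_mul_rpow_pow hα0, ← integral_complex_ofReal,
      ← MeasureTheory.integral_mul_const]
    congr with r
    push_cast
    ring
  simp only [← hterm]
  refine hasSum_integral_of_dominated_convergence
    (fun k r => Real.exp (-r) * ((‖w‖ * r ^ α) ^ k / k.factorial))
    (fun k => Continuous.aestronglyMeasurable (by fun_prop)) (fun k => ?_)
    (.of_forall fun r => (hexp _ _).summable) ?_ (.of_forall fun r => hcexp _ _)
  · filter_upwards [ae_restrict_mem measurableSet_Ioi] with r hr
    simp [Complex.norm_exp, abs_of_nonneg (Real.rpow_nonneg (le_of_lt hr) α)]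
  · simp only [(hexp _ _).tsum_eq]
    exact integrableOn_exp_neg_add_mul_rpow hα0 hα ‖w‖

theorem inv_Gamma_eq_sin_mul_Gamma {s : ℝ} (hs : s < 1) :
    (Real.Gamma s)⁻¹ = Real.sin (π * s) * Real.Gamma (1 - s) / π := by
  have hΓ : Real.Gamma (1 - s) ≠ 0 := (Real.Gamma_pos_of_pos (sub_pos.2 hs)).ne'
  rw [eq_div_of_mul_eq hΓ (Real.Gamma_mul_Gamma_one_sub s)]
  field_simp

theorem hasSum_wrightW (hα0 : 0 ≤ α) (hα : α < 1) (x : ℝ) :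
    HasSum (fun k : ℕ => x ^ k / (k.factorial * Real.Gamma (0 - α * k)))
      (-(∫ r in Ioi (0 : ℝ), Complex.exp
        (-r + x * Complex.exp ((α * π : ℝ) * Complex.I) * (r ^ α : ℝ))).im / π) := by
  refine (((Complex.hasSum_im (hasSum_integral_cexp_neg_add_mul_rpow hα0 hα
    (x * Complex.exp ((α * π : ℝ) * Complex.I)))).neg).div_const π).congr_fun fun k => ?_
  have hsin : (Complex.exp ((α * π : ℝ) * Complex.I) ^ k).im = -Real.sin (π * (0 - α * k)) := by
    rw [← Complex.exp_nat_mul, ← Real.sin_neg, ← Complex.exp_ofReal_mul_I_im]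
    push_cast
    ring_nf
  have hpow : (Real.Gamma (α * k + 1) : ℂ)
      * ((x * Complex.exp ((α * π : ℝ) * Complex.I)) ^ k / k.factorial)
      = ((Real.Gamma (α * k + 1) * (x ^ k / k.factorial) : ℝ) : ℂ)
        * Complex.exp ((α * π : ℝ) * Complex.I) ^ k := by
    push_cast
    ring
  have hs : 0 - α * k < 1 := by linarith [mul_nonneg hα0 k.cast_nonneg]
  rw [hpow, Complex.im_ofReal_mul, hsin, ← div_div, div_eq_mul_inv _ (Real.Gamma _),
    inv_Gamma_eq_sin_mul_Gamma hs]
  ring_nf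

theorem wrightW_eq_im_integral (hα0 : 0 ≤ α) (hα : α < 1) (x : ℝ) :
    wrightW α 0 x = -(∫ r in Ioi (0 : ℝ), Complex.exp
      (-r + x * Complex.exp ((α * π : ℝ) * Complex.I) * (r ^ α : ℝ))).im / π :=
  (hasSum_wrightW hα0 hα x).tsum_eq

theorem measurable_wrightW (hα0 : 0 ≤ α) (hα : α < 1) : Measurable (wrightW α 0) :=
  measurable_of_tendsto_metrizable
    (f := fun (n : ℕ) (x : ℝ) =>
      ∑ k ∈ Finset.range n, x ^ k / (k.factorial * Real.Gamma (0 - α * k)))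
    (fun n => by fun_prop)
    (tendsto_pi_nhds.2 fun x => (hasSum_wrightW hα0 hα x).summable.hasSum.tendsto_sum_nat)

end HankelIntegral

section Bromwich

/-- The Bromwich form `exp (s - z s ^ α) ds`, whose contour integral is `2πi W(-z; -α, 0)`, in
the coordinate `w = log s`: there it is entire, so that no branch cut has to be avoided. -/
noncomputable def bromwichForm (α z : ℝ) (w : ℂ) : ℂ :=
  Complex.exp (Complex.exp w - z * Complex.exp (α * w) + w)

/-- The logarithm `log r + iθ` of the point with polar coordinates `r > 0` and `θ`. -/
noncomputable def polarLog (r θ : ℝ) : ℂ := Real.log r + θ * Complex.I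

/-- `P` is a primitive of `bromwichForm α z`, normalised to be real on the real axis. -/
structure IsBromwichPrimitive (α z : ℝ) (P : ℂ → ℂ) : Prop where
  hasDerivAt : ∀ w, HasDerivAt P (bromwichForm α z w) w
  im_ofReal : ∀ x : ℝ, (P x).im = 0

variable {α z r : ℝ} {P : ℂ → ℂ}

theorem bromwichForm_polarLog (α z θ : ℝ) (hr : 0 < r) :
    bromwichForm α z (polarLog r θ) =
      Complex.exp (r * Complex.exp (θ * Complex.I)
        - z * (r ^ α : ℝ) * Complex.exp ((α * θ : ℝ) * Complex.I))
      * (r * Complex.exp (θ * Complex.I)) := by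
  have hexp : Complex.exp (polarLog r θ) = r * Complex.exp (θ * Complex.I) := by
    rw [polarLog, Complex.exp_add, ← Complex.ofReal_exp, Real.exp_log hr]
  have hpow : Complex.exp (α * polarLog r θ)
      = (r ^ α : ℝ) * Complex.exp ((α * θ : ℝ) * Complex.I) := by
    rw [Real.rpow_def_of_pos hr, Complex.ofReal_exp, ← Complex.exp_add, polarLog]
    push_cast
    ring_nf
  rw [bromwichForm, Complex.exp_add, hexp, hpow, mul_assoc (z : ℂ)]

theorem bromwichForm_polarLog_pi (α z : ℝ) (hr : 0 < r) :
    bromwichForm α z (polarLog r π) =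
      -(r * Complex.exp
        (-r + (-z : ℝ) * Complex.exp ((α * π : ℝ) * Complex.I) * (r ^ α : ℝ))) := by
  rw [bromwichForm_polarLog α z π hr, Complex.exp_pi_mul_I]
  push_cast
  ring_nf

theorem norm_bromwichForm_polarLog_le (α z θ : ℝ) (hr : 0 < r) :
    ‖bromwichForm α z (polarLog r θ)‖ ≤ r * Real.exp (r * Real.cos θ + |z| * r ^ α) := by
  have hphase : -(z * r ^ α * Real.cos (α * θ)) ≤ |z| * r ^ α := by
    refine (neg_le_abs _).trans ?_
    rw [abs_mul, abs_mul, abs_of_nonneg (Real.rpow_nonneg hr.le α)]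
    exact mul_le_of_le_one_right (by positivity) (Real.abs_cos_le_one _)
  rw [bromwichForm_polarLog α z θ hr, norm_mul, norm_mul, Complex.norm_exp_ofReal_mul_I, mul_one,
    Complex.norm_of_nonneg hr.le, mul_comm, Complex.norm_exp, Complex.sub_re,
    ← Complex.ofReal_mul, Complex.re_ofReal_mul, Complex.re_ofReal_mul,
    Complex.exp_ofReal_mul_I_re, Complex.exp_ofReal_mul_I_re]
  gcongr
  linarith

theorem tendsto_mul_exp_mul_add_mul_rpow (hα : α < 1) (a : ℝ) {c : ℝ} (hc : c < 0) :
    Tendsto (fun r => r * Real.exp (r * c + a * r ^ α)) atTop (𝓝 0) := by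
  have hlim : Tendsto (fun r => r * Real.exp (-(-c / 2) * r)) atTop (𝓝 0) := by
    simpa only [Real.rpow_one] using
      tendsto_rpow_mul_exp_neg_mul_atTop_nhds_zero 1 (-c / 2) (by linarith)
  refine squeeze_zero' ?_ ?_ hlim
  · filter_upwards [eventually_ge_atTop 0] with r hr using by positivity
  · filter_upwards [eventually_ge_atTop 0,
      eventually_mul_rpow_le hα a (c := -c / 2) (by linarith)] with r hr hra
    gcongr
    linarith

theorem exists_isBromwichPrimitive (α z : ℝ) : ∃ P, IsBromwichPrimitive α z P := by
  have hdiff : Differentiable ℂ (bromwichForm α z) := by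
    unfold bromwichForm
    fun_prop
  obtain ⟨P, hP0, hP⟩ := hdiff.isExactOn_univ.with_val_at 0 0
  have hP' (w : ℂ) : HasDerivAt P (bromwichForm α z w) w := hP w (mem_univ w)
  refine ⟨P, hP', fun x => ?_⟩
  have hreal (x : ℝ) : (bromwichForm α z x).im = 0 := by
    simp only [bromwichForm, ← Complex.ofReal_exp, ← Complex.ofReal_mul, ← Complex.ofReal_sub,
      ← Complex.ofReal_add, Complex.ofReal_im]
  have hderiv (x : ℝ) : HasDerivAt (fun x : ℝ => (P x).im) 0 x :=
    (Complex.imCLM.hasFDerivAt.comp_hasDerivAt x (hP' x).comp_ofReal).congr_deriv (hreal x)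
  have hconst := is_const_of_deriv_eq_zero (fun x => (hderiv x).differentiableAt)
    (fun x => (hderiv x).deriv) x 0
  simpa [hP0] using hconst

namespace IsBromwichPrimitive

theorem continuous (hP : IsBromwichPrimitive α z P) : Continuous P :=
  continuous_iff_continuousAt.2 fun w => (hP.hasDerivAt w).continuousAt

theorem hasDerivAt_im_comp (hP : IsBromwichPrimitive α z P) {γ : ℝ → ℂ} {γ' : ℂ} {x : ℝ}
    (hγ : HasDerivAt γ γ' x) :
    HasDerivAt (fun x => (P (γ x)).im) (bromwichForm α z (γ x) * γ').im x :=
  Complex.imCLM.hasFDerivAt.comp_hasDerivAt x ((hP.hasDerivAt (γ x)).comp x hγ)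

theorem abs_im_polarLog_sub_le (hP : IsBromwichPrimitive α z P) (hr : 0 < r) {a b c : ℝ}
    (hab : a ≤ b) (hc : ∀ θ ∈ Icc a b, Real.cos θ ≤ c) :
    |(P (polarLog r b)).im - (P (polarLog r a)).im|
      ≤ r * Real.exp (r * c + |z| * r ^ α) * (b - a) := by
  have harc (θ : ℝ) : HasDerivAt (polarLog r) Complex.I θ :=
    (((hasDerivAt_id θ).ofReal_comp.mul_const Complex.I).const_add
      (Real.log r : ℂ)).congr_deriv (by simp)
  have hmvt := (convex_Icc a b).norm_image_sub_le_of_norm_hasDerivWithin_le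
    (C := r * Real.exp (r * c + |z| * r ^ α))
    (fun θ _ => (hP.hasDerivAt_im_comp (harc θ)).hasDerivWithinAt) (fun θ hθ => ?_)
    (left_mem_Icc.2 hab) (right_mem_Icc.2 hab)
  · simpa only [Real.norm_eq_abs, abs_of_nonneg (sub_nonneg.2 hab)] using hmvt
  · calc ‖(bromwichForm α z (polarLog r θ) * Complex.I).im‖
        ≤ ‖bromwichForm α z (polarLog r θ)‖ := by
          simpa using Complex.abs_im_le_norm (bromwichForm α z (polarLog r θ) * Complex.I)
      _ ≤ r * Real.exp (r * Real.cos θ + |z| * r ^ α) := norm_bromwichForm_polarLog_le α z θ hr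
      _ ≤ r * Real.exp (r * c + |z| * r ^ α) := by
          gcongr
          exact hc θ hθ

theorem tendsto_im_polarLog_pi_zero (hP : IsBromwichPrimitive α z P) (hα : 0 < α) :
    Tendsto (fun r => (P (polarLog r π)).im) (𝓝[>] 0) (𝓝 0) := by
  have hbound : Tendsto (fun r : ℝ => r * Real.exp (r * 1 + |z| * r ^ α) * (π - 0))
      (𝓝[>] 0) (𝓝 0) := by
    have hcont : Continuous fun r : ℝ => r * Real.exp (r * 1 + |z| * r ^ α) * (π - 0) := by
      have := Real.continuous_rpow_const hα.le
      fun_prop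
    simpa using (hcont.tendsto 0).mono_left nhdsWithin_le_nhds
  refine squeeze_zero_norm' ?_ hbound
  filter_upwards [self_mem_nhdsWithin] with r hr
  have h := hP.abs_im_polarLog_sub_le hr Real.pi_pos.le fun θ _ => Real.cos_le_one θ
  simpa [polarLog, hP.im_ofReal] using h

theorem tendsto_im_polarLog_pi_atTop (hP : IsBromwichPrimitive α z P) (hα0 : 0 < α)
    (hα : α < 1) :
    Tendsto (fun r => (P (polarLog r π)).im) atTop (𝓝 (π * wrightW α 0 (-z))) := by
  set K : ℝ → ℂ := fun r =>
    Complex.exp (-r + (-z : ℝ) * Complex.exp ((α * π : ℝ) * Complex.I) * (r ^ α : ℝ))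
  have hK : IntegrableOn K (Ioi 0) := integrableOn_cexp_neg_add_mul_rpow hα0.le hα _
  have hderiv (r : ℝ) (hr : 0 < r) : HasDerivAt (fun r => (P (polarLog r π)).im) (-(K r).im) r := by
    have h := hP.hasDerivAt_im_comp
      ((Real.hasDerivAt_log hr.ne').ofReal_comp.add_const (π * Complex.I))
    refine h.congr_deriv ?_
    rw [← polarLog, bromwichForm_polarLog_pi α z hr, neg_mul, mul_right_comm, ← Complex.ofReal_mul,
      mul_inv_cancel₀ hr.ne', Complex.ofReal_one, one_mul, Complex.neg_im]
  have hK' : IntegrableOn (fun r => -(K r).im) (Ioi 0) := hK.im.neg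
  have hFTC (R : ℝ) (hR : 0 < R) : ∫ r in (0 : ℝ)..R, -(K r).im = (P (polarLog R π)).im := by
    simpa using intervalIntegral.integral_eq_sub_of_hasDerivAt_of_tendsto hR
      (fun r hr => hderiv r hr.1)
      ((intervalIntegrable_iff_integrableOn_Ioc_of_le hR.le).2 (hK'.mono_set Ioc_subset_Ioi_self))
      (hP.tendsto_im_polarLog_pi_zero hα0)
      ((hderiv R hR).continuousAt.tendsto.mono_left nhdsWithin_le_nhds)
  have hlim : ∫ r in Ioi (0 : ℝ), -(K r).im = π * wrightW α 0 (-z) := by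
    have him : ∫ r in Ioi (0 : ℝ), (K r).im = (∫ r in Ioi (0 : ℝ), K r).im := integral_im hK
    rw [wrightW_eq_im_integral hα0.le hα, mul_div_cancel₀ _ Real.pi_ne_zero,
      MeasureTheory.integral_neg, him]
  rw [← hlim]
  refine (intervalIntegral_tendsto_integral_Ioi 0 hK' tendsto_id).congr' ?_
  filter_upwards [eventually_gt_atTop 0] with R hR using hFTC R hR

theorem tendsto_im_polarLog_of_tendsto_pi (hP : IsBromwichPrimitive α z P) (hα0 : 0 < α)
    (hα : α < 1) {ρ : ℝ → ℝ} (hρ : Tendsto ρ (𝓝[<] π) atTop) :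
    Tendsto (fun θ => (P (polarLog (ρ θ) θ)).im) (𝓝[<] π) (𝓝 (π * wrightW α 0 (-z))) := by
  obtain ⟨θ₀, hθ₀, hcos⟩ : ∃ θ₀ ∈ Ioo 0 π, ∀ θ ∈ Icc θ₀ π, Real.cos θ ≤ -(1 / 2) := by
    refine ⟨π - π / 3, ⟨by linarith [Real.pi_pos], by linarith [Real.pi_pos]⟩, fun θ hθ => ?_⟩
    rw [← Real.cos_pi_div_three, ← Real.cos_pi_sub]
    exact Real.cos_le_cos_of_nonneg_of_le_pi (by linarith [Real.pi_pos]) hθ.2 hθ.1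
  have hbound : Tendsto (fun θ => ρ θ * Real.exp (ρ θ * -(1 / 2) + |z| * ρ θ ^ α) * (π - θ))
      (𝓝[<] π) (𝓝 0) := by
    have hangle : Tendsto (fun θ : ℝ => π - θ) (𝓝[<] π) (𝓝 (π - π)) :=
      ((continuous_const.sub continuous_id).tendsto π).mono_left nhdsWithin_le_nhds
    simpa using
      ((tendsto_mul_exp_mul_add_mul_rpow hα |z| (c := -(1 / 2)) (by norm_num)).comp hρ).mul hangle
  have hdiff : Tendsto
      (fun θ => (P (polarLog (ρ θ) π)).im - (P (polarLog (ρ θ) θ)).im) (𝓝[<] π) (𝓝 0) := by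
    refine squeeze_zero_norm' ?_ hbound
    filter_upwards [Ioo_mem_nhdsLT hθ₀.2, hρ.eventually_gt_atTop 0] with θ hθ hr
    exact hP.abs_im_polarLog_sub_le hr hθ.2.le fun φ hφ => hcos φ ⟨hθ.1.le.trans hφ.1, hφ.2⟩
  simpa using ((hP.tendsto_im_polarLog_pi_atTop hα0 hα).comp hρ).sub hdiff

end IsBromwichPrimitive

end Bromwich

section SteepestDescent

/-- The polar equation `r = descentRadius α z θ`, `0 < θ < π`, of the steepest-descent contour of
`s - z s ^ α`: the curve on which this phase is real. -/
noncomputable def descentRadius (α z θ : ℝ) : ℝ :=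
  (z * (Real.sin (α * θ) / Real.sin θ)) ^ (1 / (1 - α))

/-- The Zolotarev function
`sin ((1 - α) θ) sin (αθ) ^ (α / (1 - α)) / sin θ ^ (1 / (1 - α))`. -/
noncomputable def zolotarev (α θ : ℝ) : ℝ :=
  (Real.sin (α * θ) / Real.sin θ) ^ (α / (1 - α)) * (Real.sin ((1 - α) * θ) / Real.sin θ)

/-- The value of `-(s - z s ^ α)` at the point `s` of argument `θ` on the steepest-descent
contour; see `phase_descentRadius`. -/
noncomputable def descentPhase (α z θ : ℝ) : ℝ := z ^ (1 / (1 - α)) * zolotarev α θ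

variable {α z θ : ℝ}

theorem mul_sin_le_sin_mul (hα0 : 0 ≤ α) (hα : α ≤ 1) (hθ : θ ∈ Icc 0 π) :
    α * Real.sin θ ≤ Real.sin (α * θ) := by
  simpa using strictConcaveOn_sin_Icc.concaveOn.2 (left_mem_Icc.2 Real.pi_pos.le) hθ
    (sub_nonneg.2 hα) hα0 (sub_add_cancel 1 α)

theorem le_sin_mul_div_sin (hα0 : 0 ≤ α) (hα : α ≤ 1) (hθ : θ ∈ Ioo 0 π) :
    α ≤ Real.sin (α * θ) / Real.sin θ :=
  (le_div_iff₀ (Real.sin_pos_of_mem_Ioo hθ)).2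
    (mul_sin_le_sin_mul hα0 hα (Ioo_subset_Icc_self hθ))

theorem sin_mul_pos (hα0 : 0 < α) (hα : α ≤ 1) (hθ : θ ∈ Ioo 0 π) : 0 < Real.sin (α * θ) :=
  (mul_pos hα0 (Real.sin_pos_of_mem_Ioo hθ)).trans_le
    (mul_sin_le_sin_mul hα0.le hα (Ioo_subset_Icc_self hθ))

theorem le_zolotarev (hα0 : 0 ≤ α) (hα : α < 1) (hθ : θ ∈ Ioo 0 π) :
    α ^ (α / (1 - α)) * (1 - α) ≤ zolotarev α θ := by
  have hα1 : 0 < 1 - α := sub_pos.2 hα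
  have hratio := le_sin_mul_div_sin hα0 hα.le hθ
  exact mul_le_mul (Real.rpow_le_rpow hα0 hratio (by positivity))
    (le_sin_mul_div_sin hα1.le (by linarith) hθ) hα1.le
    (Real.rpow_nonneg (hα0.trans hratio) _)

theorem zolotarev_pos (hα0 : 0 < α) (hα : α < 1) (hθ : θ ∈ Ioo 0 π) : 0 < zolotarev α θ :=
  (mul_pos (Real.rpow_pos_of_pos hα0 _) (sub_pos.2 hα)).trans_le (le_zolotarev hα0.le hα hθ)

theorem descentPhase_pos (hα0 : 0 < α) (hα : α < 1) (hz : 0 < z) (hθ : θ ∈ Ioo 0 π) :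
    0 < descentPhase α z θ :=
  mul_pos (Real.rpow_pos_of_pos hz _) (zolotarev_pos hα0 hα hθ)

theorem sin_one_sub_mul (α θ : ℝ) : Real.sin ((1 - α) * θ)
    = Real.sin θ * Real.cos (α * θ) - Real.cos θ * Real.sin (α * θ) := by
  rw [sub_mul, one_mul, Real.sin_sub]

theorem descentRadius_pos (hα0 : 0 < α) (hα : α ≤ 1) (hz : 0 < z) (hθ : θ ∈ Ioo 0 π) :
    0 < descentRadius α z θ :=
  Real.rpow_pos_of_pos
    (mul_pos hz (div_pos (sin_mul_pos hα0 hα hθ) (Real.sin_pos_of_mem_Ioo hθ))) _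

theorem descentRadius_mul_sin (hα0 : 0 < α) (hα : α < 1) (hz : 0 < z) (hθ : θ ∈ Ioo 0 π) :
    descentRadius α z θ * Real.sin θ = z * descentRadius α z θ ^ α * Real.sin (α * θ) := by
  have hρ := descentRadius_pos hα0 hα.le hz hθ
  have hsin := Real.sin_pos_of_mem_Ioo hθ
  have hpow : descentRadius α z θ ^ (1 - α) = z * (Real.sin (α * θ) / Real.sin θ) := by
    have := sin_mul_pos hα0 hα.le hθ
    rw [descentRadius, ← Real.rpow_mul (by positivity), one_div_mul_cancel (sub_pos.2 hα).ne',
      Real.rpow_one]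
  calc descentRadius α z θ * Real.sin θ
      = descentRadius α z θ ^ (1 - α) * descentRadius α z θ ^ α * Real.sin θ := by
        rw [← Real.rpow_add hρ, sub_add_cancel, Real.rpow_one]
    _ = z * descentRadius α z θ ^ α * Real.sin (α * θ) := by
        rw [hpow]
        field_simp

theorem descentRadius_mul_sin_div_sin (hα0 : 0 < α) (hα : α < 1) (hz : 0 < z)
    (hθ : θ ∈ Ioo 0 π) :
    descentRadius α z θ * (Real.sin ((1 - α) * θ) / Real.sin (α * θ)) = descentPhase α z θ := by
  have hsin := Real.sin_pos_of_mem_Ioo hθ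
  have hsinα := sin_mul_pos hα0 hα.le hθ
  have hexp : 1 / (1 - α) = α / (1 - α) + 1 := by
    field_simp [(sub_pos.2 hα).ne']
    ring
  rw [descentRadius, Real.mul_rpow hz.le (by positivity), mul_assoc, descentPhase, zolotarev]
  nth_rewrite 2 [hexp]
  rw [Real.rpow_add_one (by positivity)]
  field_simp

theorem phase_descentRadius (hα0 : 0 < α) (hα : α < 1) (hz : 0 < z) (hθ : θ ∈ Ioo 0 π) :
    descentRadius α z θ * Complex.exp (θ * Complex.I)
      - z * (descentRadius α z θ ^ α : ℝ) * Complex.exp ((α * θ : ℝ) * Complex.I)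
      = (-descentPhase α z θ : ℝ) := by
  have hsinα := sin_mul_pos hα0 hα.le hθ
  have him := descentRadius_mul_sin hα0 hα hz hθ
  rw [← Complex.ofReal_mul]
  refine Complex.ext ?_ ?_
  · rw [Complex.sub_re, Complex.re_ofReal_mul, Complex.re_ofReal_mul, Complex.exp_ofReal_mul_I_re,
      Complex.exp_ofReal_mul_I_re, Complex.ofReal_re, ← descentRadius_mul_sin_div_sin hα0 hα hz hθ,
      sin_one_sub_mul, eq_div_of_mul_eq hsinα.ne' him.symm]
    field_simp
    ring
  · rw [Complex.sub_im, Complex.im_ofReal_mul, Complex.im_ofReal_mul, Complex.exp_ofReal_mul_I_im,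
      Complex.exp_ofReal_mul_I_im, Complex.ofReal_im, him, sub_self]

theorem hasDerivAt_log_descentRadius (hα0 : 0 < α) (hα : α < 1) (hz : 0 < z)
    (hθ : θ ∈ Ioo 0 π) :
    HasDerivAt (fun θ => Real.log (descentRadius α z θ))
      ((α * (Real.cos (α * θ) / Real.sin (α * θ)) - Real.cos θ / Real.sin θ) / (1 - α)) θ := by
  have hnum : HasDerivAt (fun θ => Real.log (Real.sin (α * θ)))
      (α * (Real.cos (α * θ) / Real.sin (α * θ))) θ :=
    (((hasDerivAt_id θ).const_mul α).sin.log (sin_mul_pos hα0 hα.le hθ).ne').congr_deriv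
      (by simp only [id, mul_one]; ring)
  have hden : HasDerivAt (fun θ => Real.log (Real.sin θ)) (Real.cos θ / Real.sin θ) θ :=
    (Real.hasDerivAt_sin θ).log (Real.sin_pos_of_mem_Ioo hθ).ne'
  refine (((hnum.sub hden).const_add (Real.log z)).div_const (1 - α)).congr_of_eventuallyEq ?_
  filter_upwards [isOpen_Ioo.mem_nhds hθ] with φ hφ
  have hsin := Real.sin_pos_of_mem_Ioo hφ
  have hsinα := sin_mul_pos hα0 hα.le hφ
  rw [descentRadius, Real.log_rpow (by positivity), Real.log_mul hz.ne' (by positivity),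
    Real.log_div hsinα.ne' hsin.ne', one_div_mul_eq_div]
  rfl

theorem tendsto_descentRadius_zero (hα0 : 0 < α) (hα : α < 1) (z : ℝ) :
    Tendsto (descentRadius α z) (𝓝[>] 0) (𝓝 ((z * α) ^ (1 / (1 - α)))) := by
  have hratio : Tendsto (fun θ => Real.sin (α * θ) / Real.sin θ) (𝓝[>] 0) (𝓝 α) := by
    have hsinc : ContinuousAt (fun θ => α * Real.sinc (α * θ) / Real.sinc θ) 0 :=
      have := Real.continuous_sinc
      ContinuousAt.div (by fun_prop) this.continuousAt (by simp)
    have hlim := hsinc.tendsto.mono_left (nhdsWithin_le_nhds (s := Ioi 0))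
    simp only [mul_zero, Real.sinc_zero, mul_one, div_one] at hlim
    refine hlim.congr' ?_
    filter_upwards [self_mem_nhdsWithin] with θ hθ
    have hθ' : θ ≠ 0 := (mem_Ioi.1 hθ).ne'
    rw [Real.sinc_of_ne_zero hθ', Real.sinc_of_ne_zero (mul_ne_zero hα0.ne' hθ')]
    field_simp
  exact (hratio.const_mul z).rpow_const (.inr (by have := sub_pos.2 hα; positivity))

theorem tendsto_descentRadius_pi (hα0 : 0 < α) (hα : α < 1) (hz : 0 < z) :
    Tendsto (descentRadius α z) (𝓝[<] π) atTop := by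
  have hnum : Tendsto (fun θ => Real.sin (α * θ)) (𝓝[<] π) (𝓝 (Real.sin (α * π))) :=
    (Continuous.tendsto (by fun_prop) π).mono_left nhdsWithin_le_nhds
  have hden : Tendsto Real.sin (𝓝[<] π) (𝓝[>] 0) := by
    refine tendsto_nhdsWithin_iff.2 ⟨?_, ?_⟩
    · simpa using (Real.continuous_sin.tendsto π).mono_left (nhdsWithin_le_nhds (s := Iio π))
    · filter_upwards [Ioo_mem_nhdsLT Real.pi_pos] with θ hθ using Real.sin_pos_of_mem_Ioo hθ
  have hsin : 0 < Real.sin (α * π) :=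
    Real.sin_pos_of_mem_Ioo ⟨by positivity, mul_lt_of_lt_one_left Real.pi_pos hα⟩
  have hratio : Tendsto (fun θ => Real.sin (α * θ) / Real.sin θ) (𝓝[<] π) atTop :=
    hnum.pos_mul_atTop hsin hden.inv_tendsto_nhdsGT_zero
  exact (tendsto_rpow_atTop (one_div_pos.2 (sub_pos.2 hα))).comp (hratio.const_mul_atTop hz)

namespace IsBromwichPrimitive

variable {P : ℂ → ℂ}

theorem hasDerivAt_im_descentRadius (hP : IsBromwichPrimitive α z P) (hα0 : 0 < α) (hα : α < 1)
    (hz : 0 < z) (hθ : θ ∈ Ioo 0 π) :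
    HasDerivAt (fun θ => (P (polarLog (descentRadius α z θ) θ)).im)
      (α / (1 - α) * (descentPhase α z θ * Real.exp (-descentPhase α z θ))) θ := by
  have hsin := Real.sin_pos_of_mem_Ioo hθ
  have hsinα := sin_mul_pos hα0 hα.le hθ
  have hα1 := sub_pos.2 hα
  have hcurve := (hasDerivAt_log_descentRadius hα0 hα hz hθ).ofReal_comp.add
    ((hasDerivAt_id θ).ofReal_comp.mul_const Complex.I)
  set d := (α * (Real.cos (α * θ) / Real.sin (α * θ)) - Real.cos θ / Real.sin θ) / (1 - α) with hd
  have hspeed : Real.sin θ * d + Real.cos θ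
      = α / (1 - α) * (Real.sin ((1 - α) * θ) / Real.sin (α * θ)) := by
    rw [hd, sin_one_sub_mul]
    field_simp
    ring
  refine (hP.hasDerivAt_im_comp hcurve).congr_deriv ?_
  change (bromwichForm α z (polarLog (descentRadius α z θ) θ) * _).im = _
  rw [bromwichForm_polarLog α z θ (descentRadius_pos hα0 hα.le hz hθ),
    phase_descentRadius hα0 hα hz hθ, ← Complex.ofReal_exp, mul_assoc, mul_assoc,
    Complex.im_ofReal_mul, Complex.im_ofReal_mul]
  have him : (Complex.exp (θ * Complex.I) * (d + (1 : ℝ) * Complex.I)).im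
      = Real.sin θ * d + Real.cos θ := by
    rw [Complex.mul_im, Complex.exp_ofReal_mul_I_im, Complex.exp_ofReal_mul_I_re, add_comm]
    simp
  rw [him, hspeed, ← descentRadius_mul_sin_div_sin hα0 hα hz hθ]
  ring

theorem tendsto_im_descentRadius_zero (hP : IsBromwichPrimitive α z P) (hα0 : 0 < α)
    (hα : α < 1) (hz : 0 < z) :
    Tendsto (fun θ => (P (polarLog (descentRadius α z θ) θ)).im) (𝓝[>] 0) (𝓝 0) := by
  have hlog := (Real.continuousAt_log (by positivity)).tendsto.comp
    (tendsto_descentRadius_zero hα0 hα z)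
  have hcurve : Tendsto (fun θ => polarLog (descentRadius α z θ) θ) (𝓝[>] 0)
      (𝓝 (Real.log ((z * α) ^ (1 / (1 - α))) : ℝ)) := by
    have hangle : Tendsto (fun θ : ℝ => θ * Complex.I) (𝓝[>] 0) (𝓝 ((0 : ℝ) * Complex.I)) :=
      (Continuous.tendsto (by fun_prop) 0).mono_left nhdsWithin_le_nhds
    simpa [polarLog] using ((Complex.continuous_ofReal.tendsto _).comp hlog).add hangle
  simpa [hP.im_ofReal, Function.comp_def] using
    ((Complex.continuous_im.comp hP.continuous).tendsto _).comp hcurve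

end IsBromwichPrimitive

end SteepestDescent

section ZolotarevRepresentation

variable {α z : ℝ}

theorem intervalIntegrable_descentPhase_mul_exp_neg (hα0 : 0 < α) (hα : α < 1) (hz : 0 < z) :
    IntervalIntegrable (fun θ => descentPhase α z θ * Real.exp (-descentPhase α z θ))
      volume 0 π := by
  rw [intervalIntegrable_iff_integrableOn_Ioo_of_le Real.pi_pos.le]
  refine Measure.integrableOn_of_bounded (M := Real.exp (-1)) (by simp) ?_ ?_
  · unfold descentPhase zolotarev
    fun_prop
  · filter_upwards [ae_restrict_mem measurableSet_Ioo] with θ hθ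
    have := descentPhase_pos hα0 hα hz hθ
    rw [Real.norm_of_nonneg (by positivity)]
    exact Real.mul_exp_neg_le_exp_neg_one _

theorem wrightW_neg_eq_integral_descentPhase (hα0 : 0 < α) (hα : α < 1) (hz : 0 < z) :
    wrightW α 0 (-z) = α / (1 - α) / π *
      ∫ θ in (0 : ℝ)..π, descentPhase α z θ * Real.exp (-descentPhase α z θ) := by
  obtain ⟨P, hP⟩ := exists_isBromwichPrimitive α z
  have hFTC := intervalIntegral.integral_eq_sub_of_hasDerivAt_of_tendsto Real.pi_pos
    (fun θ hθ => hP.hasDerivAt_im_descentRadius hα0 hα hz hθ)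
    ((intervalIntegrable_descentPhase_mul_exp_neg hα0 hα hz).const_mul _)
    (hP.tendsto_im_descentRadius_zero hα0 hα hz)
    (hP.tendsto_im_polarLog_of_tendsto_pi hα0 hα (tendsto_descentRadius_pi hα0 hα hz))
  rw [intervalIntegral.integral_const_mul, sub_zero] at hFTC
  rw [div_mul_eq_mul_div, hFTC, mul_div_cancel_left₀ _ Real.pi_ne_zero]

theorem wrightW_neg_pos (hα0 : 0 < α) (hα : α < 1) (hz : 0 < z) : 0 < wrightW α 0 (-z) := by
  have := sub_pos.2 hα
  rw [wrightW_neg_eq_integral_descentPhase hα0 hα hz]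
  refine mul_pos (by positivity) (intervalIntegral.intervalIntegral_pos_of_pos_on
    (intervalIntegrable_descentPhase_mul_exp_neg hα0 hα hz) (fun θ hθ => ?_) Real.pi_pos)
  have := descentPhase_pos hα0 hα hz hθ
  positivity

theorem mul_exp_neg_le_rpow {p u : ℝ} (hp : 0 < p) (hu : 0 < u) :
    u * Real.exp (-u) ≤ p ^ p * u ^ (1 - p) := by
  have hpow : u ^ p ≤ p ^ p * Real.exp u := by
    calc u ^ p = p ^ p * (u / p) ^ p := by
          rw [← Real.mul_rpow hp.le (by positivity), mul_div_cancel₀ _ hp.ne']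
      _ ≤ p ^ p * Real.exp (u / p) ^ p := by
          gcongr
          linarith [Real.add_one_le_exp (u / p)]
      _ = p ^ p * Real.exp u := by rw [← Real.exp_mul, div_mul_cancel₀ _ hp.ne']
  calc u * Real.exp (-u) = u ^ p * u ^ (1 - p) * Real.exp (-u) := by
        rw [← Real.rpow_add hu, add_sub_cancel, Real.rpow_one]
    _ ≤ p ^ p * Real.exp u * u ^ (1 - p) * Real.exp (-u) := by gcongr
    _ = p ^ p * u ^ (1 - p) * (Real.exp u * Real.exp (-u)) := by ring
    _ = p ^ p * u ^ (1 - p) := by rw [← Real.exp_add, add_neg_cancel, Real.exp_zero, mul_one]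

theorem descentPhase_mul_exp_neg_le {θ : ℝ} (hα0 : 0 < α) (hα : α < 1) (hz : 0 < z)
    (hθ : θ ∈ Ioo 0 π) :
    descentPhase α z θ * Real.exp (-descentPhase α z θ) ≤
      (1 / α) ^ (1 / α) * (α ^ (α / (1 - α)) * (1 - α)) ^ (1 - 1 / α) * z ^ (-1 / α) := by
  have hα1 : 0 < 1 - α := sub_pos.2 hα
  have hpos := zolotarev_pos hα0 hα hθ
  have hzpow : (z ^ (1 / (1 - α))) ^ (1 - 1 / α) = z ^ (-1 / α) := by
    rw [← Real.rpow_mul hz.le]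
    congr 1
    field_simp
    ring
  calc descentPhase α z θ * Real.exp (-descentPhase α z θ)
      ≤ (1 / α) ^ (1 / α) * descentPhase α z θ ^ (1 - 1 / α) :=
        mul_exp_neg_le_rpow (by positivity) (descentPhase_pos hα0 hα hz hθ)
    _ = (1 / α) ^ (1 / α) * zolotarev α θ ^ (1 - 1 / α) * z ^ (-1 / α) := by
        rw [descentPhase, Real.mul_rpow (by positivity) hpos.le, hzpow]
        ring
    _ ≤ (1 / α) ^ (1 / α) * (α ^ (α / (1 - α)) * (1 - α)) ^ (1 - 1 / α) * z ^ (-1 / α) := by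
        gcongr ?_ * ?_ * _
        exact Real.rpow_le_rpow_of_nonpos (by positivity) (le_zolotarev hα0.le hα hθ)
          (sub_nonpos.2 (one_le_one_div hα0 hα.le))

theorem exists_wrightW_neg_le (hα0 : 0 < α) (hα : α < 1) :
    ∃ C, ∀ z, 0 < z → wrightW α 0 (-z) ≤ C * z ^ (-1 / α) := by
  have := sub_pos.2 hα
  set M := (1 / α) ^ (1 / α) * (α ^ (α / (1 - α)) * (1 - α)) ^ (1 - 1 / α)
  refine ⟨α / (1 - α) / π * (M * π), fun z hz => ?_⟩
  have hint : ∫ θ in (0 : ℝ)..π, descentPhase α z θ * Real.exp (-descentPhase α z θ)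
      ≤ ∫ _ in (0 : ℝ)..π, M * z ^ (-1 / α) :=
    intervalIntegral.integral_mono_on_of_le_Ioo Real.pi_pos.le
      (intervalIntegrable_descentPhase_mul_exp_neg hα0 hα hz) intervalIntegrable_const
      fun θ hθ => descentPhase_mul_exp_neg_le hα0 hα hz hθ
  rw [intervalIntegral.integral_const, sub_zero, smul_eq_mul] at hint
  rw [wrightW_neg_eq_integral_descentPhase hα0 hα hz]
  calc α / (1 - α) / π * ∫ θ in (0 : ℝ)..π, descentPhase α z θ * Real.exp (-descentPhase α z θ)
      ≤ α / (1 - α) / π * (π * (M * z ^ (-1 / α))) := by gcongr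
    _ = α / (1 - α) / π * (M * π) * z ^ (-1 / α) := by ring

theorem isPosLocBdd_inv_mul_wrightW {ℓ : ℝ} (hα0 : 0 < α) (hα : α < 1) (hℓ : 0 < ℓ) :
    IsPosLocBdd fun t => t⁻¹ * wrightW α 0 (-ℓ * t ^ (-α)) where
  measurable := measurable_inv.mul
    ((measurable_wrightW hα0.le hα).comp ((measurable_id.pow_const _).const_mul _))
  pos t ht := by
    rw [neg_mul]
    exact mul_pos (inv_pos.2 ht) (wrightW_neg_pos hα0 hα (by positivity))
  le _ := by
    obtain ⟨C, hC⟩ := exists_wrightW_neg_le hα0 hα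
    refine ⟨C * ℓ ^ (-1 / α), fun t ht _ => ?_⟩
    have hpow : (ℓ * t ^ (-α)) ^ (-1 / α) = ℓ ^ (-1 / α) * t := by
      rw [Real.mul_rpow hℓ.le (by positivity), ← Real.rpow_mul ht.le,
        show -α * (-1 / α) = 1 by field_simp, Real.rpow_one]
    calc t⁻¹ * wrightW α 0 (-ℓ * t ^ (-α)) ≤ t⁻¹ * (C * (ℓ * t ^ (-α)) ^ (-1 / α)) := by
          rw [neg_mul]
          gcongr
          exact hC _ (by positivity)
      _ = C * ℓ ^ (-1 / α) := by
          rw [hpow]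
          field_simp

end ZolotarevRepresentation

theorem Sconv_pos_general (m : ℕ) (α : Fin (m + 1) → ℝ) (hpos : ∀ j, 0 < α j)
    (hlt1 : ∀ j, α j < 1) (ℓ : Fin (m + 1) → ℝ) (hℓ : ∀ j, 0 < ℓ j) (t : ℝ) (ht : 0 < t) :
    0 < Sconv m 0 α ℓ t := by
  refine (IsPosLocBdd.iterConv m _ fun j => ?_).pos t ht
  simpa only [ite_self, zero_sub, Real.rpow_neg_one] using
    isPosLocBdd_inv_mul_wrightW (hpos j) (hlt1 j) (hℓ j)

/-- Positivity of the iterated convolution `S⁰_m`. -/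
theorem Sconv_pos
    (m : ℕ) (α : Fin (m + 1) → ℝ)
    (hmono : StrictMono α) (hpos : ∀ j, 0 < α j) (hlt1 : ∀ j, α j < 1)
    (ℓ : Fin (m + 1) → ℝ) (hℓ : ∀ j, 0 < ℓ j)
    (t : ℝ) (ht : 0 < t) :
    0 < Sconv m 0 α ℓ t :=
  Sconv_pos_general m α hpos hlt1 ℓ hℓ t ht
end
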